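/- arXiv:2512.06872 — 4 statements merged into one kernel-verified Lean document; each statement's English description precedes it below -/
import Mathlib

section
/- Let σ_{Y,0}, σ_{Y,1} > 0 and ρ₀, ρ₁ ∈ [−1,1], and set σ_z = √(1−ρ_z²)·σ_{Y,z} for z ∈ {0,1}. Then the efficiency gain from incorporating surrogates satisfies the identity (σ_{Y,0}+σ_{Y,1})² − (σ₀+σ₁)² − ρ₀²σ_{Y,0}² − ρ₁²σ_{Y,1}² = 2(1 − √(1−ρ₀²)·√(1−ρ₁²))·σ_{Y,0}·σ_{Y,1}, and this quantity is strictly positive if and only if ρ₀² + ρ₁² > 0. -/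
/-!
Since `σ_z² + ρ_z² σ_{Y,z}² = σ_{Y,z}²`, all squares cancel in the efficiency gain and only the
cross terms `2 (σ_{Y,0} σ_{Y,1} - σ₀ σ₁)` survive. The factor `√(1 - ρ₀²) √(1 - ρ₁²)` relating
the two products is less than `1` exactly when one of the correlations is nonzero.
-/

theorem sqrt_one_sub_mul_sqrt_one_sub_lt_one_iff {x y : ℝ} (hx : 0 ≤ x) (hy : 0 ≤ y) :
    √(1 - x) * √(1 - y) < 1 ↔ 0 < x + y := by
  constructor
  · intro h
    by_contra! hxy
    obtain ⟨rfl, rfl⟩ := (add_eq_zero_iff_of_nonneg hx hy).1 (hxy.antisymm (add_nonneg hx hy))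
    simp at h
  · intro hxy
    have sqrt_le {t : ℝ} (ht : 0 ≤ t) : √(1 - t) ≤ 1 :=
      Real.sqrt_le_one.2 (sub_le_self 1 ht)
    have sqrt_lt {t : ℝ} (ht : 0 < t) : √(1 - t) < 1 :=
      (Real.sqrt_lt' one_pos).2 (by simpa using ht)
    rcases hx.lt_or_eq with hx_pos | rfl
    · exact mul_lt_one_of_nonneg_of_lt_one_left (Real.sqrt_nonneg _) (sqrt_lt hx_pos) (sqrt_le hy)
    · exact mul_lt_one_of_nonneg_of_lt_one_right (sqrt_le hx) (Real.sqrt_nonneg _)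
        (sqrt_lt (by simpa using hxy))

/-- The residual standard deviation `σ_z` of an outcome with standard deviation `σ`, after
adjusting for a surrogate whose correlation with the outcome is `ρ`. It is meaningful only for
`|ρ| ≤ 1`: otherwise the square root takes the junk value `0`. -/
noncomputable def residualSD (ρ σ : ℝ) : ℝ := √(1 - ρ ^ 2) * σ

section ResidualSD

variable {ρ₀ ρ₁ σ₀ σ₁ : ℝ}

theorem residualSD_sq_add_sq_mul_sq {ρ : ℝ} (hρ : |ρ| ≤ 1) (σ : ℝ) :
    residualSD ρ σ ^ 2 + ρ ^ 2 * σ ^ 2 = σ ^ 2 := by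
  have hsq : √(1 - ρ ^ 2) ^ 2 = 1 - ρ ^ 2 :=
    Real.sq_sqrt (sub_nonneg.2 ((sq_le_one_iff_abs_le_one ρ).2 hρ))
  rw [residualSD, mul_pow, hsq]
  ring

theorem residualSD_mul_residualSD (ρ₀ ρ₁ σ₀ σ₁ : ℝ) :
    residualSD ρ₀ σ₀ * residualSD ρ₁ σ₁ = √(1 - ρ₀ ^ 2) * √(1 - ρ₁ ^ 2) * (σ₀ * σ₁) :=
  mul_mul_mul_comm _ _ _ _

theorem residualSD_mul_residualSD_lt_iff (hσ : 0 < σ₀ * σ₁) :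
    residualSD ρ₀ σ₀ * residualSD ρ₁ σ₁ < σ₀ * σ₁ ↔ 0 < ρ₀ ^ 2 + ρ₁ ^ 2 := by
  rw [residualSD_mul_residualSD, mul_lt_iff_lt_one_left hσ,
    sqrt_one_sub_mul_sqrt_one_sub_lt_one_iff (sq_nonneg ρ₀) (sq_nonneg ρ₁)]

theorem add_sq_sub_residualSD_add_sq_sub (hρ₀ : |ρ₀| ≤ 1) (hρ₁ : |ρ₁| ≤ 1) (σ₀ σ₁ : ℝ) :
    (σ₀ + σ₁) ^ 2 - (residualSD ρ₀ σ₀ + residualSD ρ₁ σ₁) ^ 2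
        - ρ₀ ^ 2 * σ₀ ^ 2 - ρ₁ ^ 2 * σ₁ ^ 2
      = 2 * (σ₀ * σ₁ - residualSD ρ₀ σ₀ * residualSD ρ₁ σ₁) := by
  linear_combination
    -residualSD_sq_add_sq_mul_sq hρ₀ σ₀ - residualSD_sq_add_sq_mul_sq hρ₁ σ₁

end ResidualSD

/-- Efficiency gain from incorporating surrogates: with σ_z = √(1−ρ_z²)·σ_{Y,z},
(σ_{Y,0}+σ_{Y,1})² − (σ₀+σ₁)² − ρ₀²σ_{Y,0}² − ρ₁²σ_{Y,1}²
  = 2(1 − √(1−ρ₀²)√(1−ρ₁²))σ_{Y,0}σ_{Y,1}, which is > 0 iff ρ₀² + ρ₁² > 0. -/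
theorem stmt6 (σY0 σY1 ρ0 ρ1 : ℝ) (h0 : 0 < σY0) (h1 : 0 < σY1)
    (hρ0 : ρ0 ∈ Set.Icc (-1:ℝ) 1) (hρ1 : ρ1 ∈ Set.Icc (-1:ℝ) 1) :
    ((σY0 + σY1)^2
        - (Real.sqrt (1 - ρ0^2) * σY0 + Real.sqrt (1 - ρ1^2) * σY1)^2
        - ρ0^2 * σY0^2 - ρ1^2 * σY1^2
      = 2 * (1 - Real.sqrt (1 - ρ0^2) * Real.sqrt (1 - ρ1^2)) * σY0 * σY1) ∧
    (0 < 2 * (1 - Real.sqrt (1 - ρ0^2) * Real.sqrt (1 - ρ1^2)) * σY0 * σY1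
      ↔ 0 < ρ0^2 + ρ1^2) := by
  have gain_eq : 2 * (1 - √(1 - ρ0 ^ 2) * √(1 - ρ1 ^ 2)) * σY0 * σY1
      = 2 * (σY0 * σY1 - residualSD ρ0 σY0 * residualSD ρ1 σY1) := by
    rw [residualSD_mul_residualSD]
    ring
  rw [gain_eq]
  constructor
  · exact add_sq_sub_residualSD_add_sq_sub (abs_le.2 hρ0) (abs_le.2 hρ1) σY0 σY1
  · rw [mul_pos_iff_of_pos_left two_pos, sub_pos]
    exact residualSD_mul_residualSD_lt_iff (mul_pos h0 h1)
end

section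
/- Let σ₀, σ₁ > 0, let π* = σ₁/(σ₀+σ₁), let π ∈ (0,1), and set ε = |π − π*|. If ε ≤ (σ₀ ∧ σ₁)/(2(σ₀+σ₁)), then σ₁²/π + σ₀²/(1−π) − σ₁²/π* − σ₀²/(1−π*) ≤ 2(σ₀+σ₁)⁴ ε² / (σ₀σ₁); equivalently, the excess of the design objective over its minimum is at most 2(σ₀+σ₁)² ε² / (π̲(1−π̲)), where π̲ = min(π*, 1−π*) and π̲(1−π̲) = σ₀σ₁/(σ₀+σ₁)². -/
/-!
The objective `π ↦ σ₁²/π + σ₀²/(1-π)` takes the value `(σ₀+σ₁)²` at its minimizer `π*`, and its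
excess over that value is exactly `(σ₀+σ₁)²(π-π*)²/(π(1-π))`. Only the denominator remains to be
controlled: if `|π-π*| ≤ r min(π*, 1-π*)`, then moving from `π*` to `π` does not decrease
one of the factors `π`, `1-π` and keeps at least a fraction `1-r` of the other, so
`π(1-π) ≥ (1-r)π*(1-π*)`. The theorem is the case `r = 1/2`.
-/

theorem one_sub_mul_le_mul_one_sub_of_abs_sub_le {R : Type*} [CommRing R] [LinearOrder R]
    [IsStrictOrderedRing R] {p x r : R} (hp : p ∈ Set.Icc 0 1) (hr : r ∈ Set.Icc 0 1)
    (hx : |x - p| ≤ r * min p (1 - p)) :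
    (1 - r) * (p * (1 - p)) ≤ x * (1 - x) := by
  have hp' : 0 ≤ 1 - p := sub_nonneg.2 hp.2
  have hr' : 0 ≤ 1 - r := sub_nonneg.2 hr.2
  obtain ⟨hlower, hupper⟩ := abs_le.1 hx
  rcases le_total p x with hpx | hxp
  · have hshrink : (1 - r) * (1 - p) ≤ 1 - x := by
      linarith [mul_le_mul_of_nonneg_left (min_le_right p (1 - p)) hr.1]
    calc (1 - r) * (p * (1 - p)) = p * ((1 - r) * (1 - p)) := by ring
      _ ≤ x * (1 - x) := mul_le_mul hpx hshrink (mul_nonneg hr' hp') (hp.1.trans hpx)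
  · have hshrink : (1 - r) * p ≤ x := by
      linarith [mul_le_mul_of_nonneg_left (min_le_left p (1 - p)) hr.1]
    calc (1 - r) * (p * (1 - p)) = (1 - r) * p * (1 - p) := by ring
      _ ≤ x * (1 - x) :=
        mul_le_mul hshrink (sub_le_sub_left hxp 1) hp' ((mul_nonneg hr' hp.1).trans hshrink)

section Field

variable {K : Type*} [Field K]

/-- The design objective `π ↦ σ₁²/π + σ₀²/(1-π)` of a two-arm experiment with residual standard
deviations `σ0`, `σ1` and treatment fraction `π`, the quantity the allocation is chosen to
minimize. At `π = 0` and `π = 1` the singular term takes the junk value `0`. -/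
def designObjective (σ0 σ1 π : K) : K := σ1 ^ 2 / π + σ0 ^ 2 / (1 - π)

/-- The Neyman allocation `π* = σ₁/(σ₀+σ₁)`, for `σ0, σ1 > 0` the minimizer over
`(0, 1)` of the design objective. -/
def neymanAllocation (σ0 σ1 : K) : K := σ1 / (σ0 + σ1)

variable {σ0 σ1 π : K}

theorem one_sub_neymanAllocation (hσ : σ0 + σ1 ≠ 0) :
    1 - neymanAllocation σ0 σ1 = σ0 / (σ0 + σ1) := by
  rw [neymanAllocation, one_sub_div hσ, add_sub_cancel_right]

theorem neymanAllocation_mul_one_sub (hσ : σ0 + σ1 ≠ 0) :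
    neymanAllocation σ0 σ1 * (1 - neymanAllocation σ0 σ1) = σ0 * σ1 / (σ0 + σ1) ^ 2 := by
  rw [one_sub_neymanAllocation hσ, neymanAllocation, div_mul_div_comm, mul_comm σ1, sq]

theorem designObjective_neymanAllocation (hσ : σ0 + σ1 ≠ 0) :
    designObjective σ0 σ1 (neymanAllocation σ0 σ1) = (σ0 + σ1) ^ 2 := by
  rw [designObjective, one_sub_neymanAllocation hσ, neymanAllocation]
  field_simp
  ring

theorem designObjective_sub_sq (hσ : σ0 + σ1 ≠ 0) (hπ : π * (1 - π) ≠ 0) :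
    designObjective σ0 σ1 π - (σ0 + σ1) ^ 2
      = (σ0 + σ1) ^ 2 * (π - neymanAllocation σ0 σ1) ^ 2 / (π * (1 - π)) := by
  obtain ⟨hπ0, hπ1⟩ := mul_ne_zero_iff.1 hπ
  rw [designObjective, neymanAllocation]
  field_simp
  ring

end Field

section LinearOrderedField

variable {K : Type*} [Field K] [LinearOrder K] [IsStrictOrderedRing K] {σ0 σ1 π r : K}

theorem neymanAllocation_mem_Ioo (h0 : 0 < σ0) (h1 : 0 < σ1) :
    neymanAllocation σ0 σ1 ∈ Set.Ioo 0 1 :=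
  ⟨div_pos h1 (add_pos h0 h1), (div_lt_one (add_pos h0 h1)).2 (lt_add_of_pos_left σ1 h0)⟩

theorem min_neymanAllocation_one_sub (hσ : 0 < σ0 + σ1) :
    min (neymanAllocation σ0 σ1) (1 - neymanAllocation σ0 σ1) = min σ0 σ1 / (σ0 + σ1) := by
  rw [one_sub_neymanAllocation hσ.ne', neymanAllocation, min_div_div_right hσ.le, min_comm]

theorem designObjective_sub_le (h0 : 0 < σ0) (h1 : 0 < σ1) (hr : r < 1)
    (hπ : |π - neymanAllocation σ0 σ1|
      ≤ r * min (neymanAllocation σ0 σ1) (1 - neymanAllocation σ0 σ1)) :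
    designObjective σ0 σ1 π - designObjective σ0 σ1 (neymanAllocation σ0 σ1)
      ≤ (σ0 + σ1) ^ 2 * |π - neymanAllocation σ0 σ1| ^ 2
        / ((1 - r) * (neymanAllocation σ0 σ1 * (1 - neymanAllocation σ0 σ1))) := by
  have hσ : σ0 + σ1 ≠ 0 := (add_pos h0 h1).ne'
  have hp := neymanAllocation_mem_Ioo h0 h1
  have hp' := sub_pos.2 hp.2
  have hr0 : 0 ≤ r := nonneg_of_mul_nonneg_left ((abs_nonneg _).trans hπ) (lt_min hp.1 hp')
  have hdenom := one_sub_mul_le_mul_one_sub_of_abs_sub_le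
    (Set.Ioo_subset_Icc_self hp) ⟨hr0, hr.le⟩ hπ
  have hpos := mul_pos (sub_pos.2 hr) (mul_pos hp.1 hp')
  rw [designObjective_neymanAllocation hσ,
    designObjective_sub_sq hσ (hpos.trans_le hdenom).ne', sq_abs]
  exact div_le_div_of_nonneg_left (by positivity) hpos hdenom

theorem stmt9_general (h0 : 0 < σ0) (h1 : 0 < σ1) (hr : r < 1)
    (hπ : |π - neymanAllocation σ0 σ1| ≤ r * (min σ0 σ1 / (σ0 + σ1))) :
    designObjective σ0 σ1 π - designObjective σ0 σ1 (neymanAllocation σ0 σ1)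
      ≤ (1 - r)⁻¹ * (σ0 + σ1) ^ 4 * |π - neymanAllocation σ0 σ1| ^ 2 / (σ0 * σ1) := by
  have hσ : 0 < σ0 + σ1 := add_pos h0 h1
  have hr' : 1 - r ≠ 0 := (sub_pos.2 hr).ne'
  rw [← min_neymanAllocation_one_sub hσ] at hπ
  refine (designObjective_sub_le h0 h1 hr hπ).trans_eq ?_
  rw [neymanAllocation_mul_one_sub hσ.ne']
  field_simp

end LinearOrderedField

/-- Quadratic local-growth bound for the design objective around the Neyman
allocation π* = σ₁/(σ₀+σ₁): if ε = |π − π*| ≤ (σ₀ ∧ σ₁)/(2(σ₀+σ₁)), then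
σ₁²/π + σ₀²/(1−π) − σ₁²/π* − σ₀²/(1−π*) ≤ 2(σ₀+σ₁)⁴ε²/(σ₀σ₁). -/
theorem stmt9 (σ0 σ1 π : ℝ) (h0 : 0 < σ0) (h1 : 0 < σ1)
    (hπ : π ∈ Set.Ioo (0:ℝ) 1)
    (hε : |π - σ1 / (σ0 + σ1)| ≤ min σ0 σ1 / (2 * (σ0 + σ1))) :
    σ1^2 / π + σ0^2 / (1 - π)
        - σ1^2 / (σ1 / (σ0 + σ1)) - σ0^2 / (1 - σ1 / (σ0 + σ1))
      ≤ 2 * (σ0 + σ1)^4 * |π - σ1 / (σ0 + σ1)|^2 / (σ0 * σ1) := by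
  rw [sub_sub, show (2 : ℝ) = (1 - 1 / 2)⁻¹ by norm_num]
  exact stmt9_general h0 h1 (by norm_num) (hε.trans_eq (by field_simp))
end

section
/- Let σ₀, σ₁ > 0 and let σ̂₀, σ̂₁ be real numbers with |σ̂_z − σ_z| ≤ e_z and 0 ≤ e_z ≤ σ_z/2 for z ∈ {0,1}. Then the plug-in allocation π̃ = σ̂₁/(σ̂₀+σ̂₁) and the oracle allocation π* = σ₁/(σ₀+σ₁) satisfy |π̃ − π*| ≤ 2(σ₁ e₀ + σ₀ e₁)/(σ₀+σ₁)². -/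
/-!
The difference of the two allocations is a fraction whose numerator is linear in the estimation
errors and whose denominator is `(σh0 + σh1) * (σ0 + σ1)`. If the errors add up to at most a
fraction `θ < 1` of the total `σ0 + σ1`, the estimated total is at least `(1 - θ) * (σ0 + σ1)`;
errors of at most half the true values give `θ = 1 / 2`, hence the factor `2`.
-/

theorem div_add_sub_div_add {K : Type*} [Field K] {a b a' b' : K}
    (h' : a' + b' ≠ 0) (h : a + b ≠ 0) :
    b' / (a' + b') - b / (a + b) =
      (a * (b' - b) - b * (a' - a)) / ((a' + b') * (a + b)) := by
  rw [div_sub_div _ _ h' h]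
  ring

theorem abs_mul_sub_mul_le {R : Type*} [CommRing R] [LinearOrder R] [IsStrictOrderedRing R]
    {x y e f : R} (a b : R) (hx : |x| ≤ e) (hy : |y| ≤ f) :
    |a * y - b * x| ≤ |b| * e + |a| * f :=
  calc |a * y - b * x| ≤ |a * y| + |b * x| := abs_sub _ _
    _ = |b| * |x| + |a| * |y| := by rw [abs_mul, abs_mul, add_comm]
    _ ≤ |b| * e + |a| * f := by gcongr

section LinearOrderedField

variable {K : Type*} [Field K] [LinearOrder K] [IsStrictOrderedRing K]

theorem abs_div_add_sub_div_add_le {a b a' b' e f : K}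
    (h' : a' + b' ≠ 0) (h : a + b ≠ 0) (ha : |a' - a| ≤ e) (hb : |b' - b| ≤ f) :
    |b' / (a' + b') - b / (a + b)| ≤ (|b| * e + |a| * f) / (|a' + b'| * |a + b|) := by
  rw [div_add_sub_div_add h' h, abs_div, abs_mul (a' + b')]
  gcongr
  exact abs_mul_sub_mul_le a b ha hb

theorem stmt11_general {σ0 σ1 σh0 σh1 e0 e1 θ : K} (hσ : 0 < σ0 + σ1)
    (he0 : |σh0 - σ0| ≤ e0) (he1 : |σh1 - σ1| ≤ e1)
    (he : e0 + e1 ≤ θ * (σ0 + σ1)) (hθ : θ < 1) :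
    |σh1 / (σh0 + σh1) - σ1 / (σ0 + σ1)|
      ≤ (|σ1| * e0 + |σ0| * e1) / ((1 - θ) * (σ0 + σ1) ^ 2) := by
  have htotal : (1 - θ) * (σ0 + σ1) ≤ σh0 + σh1 := by
    linarith [(abs_le.mp he0).1, (abs_le.mp he1).1]
  have hθσ : 0 < (1 - θ) * (σ0 + σ1) := mul_pos (sub_pos.mpr hθ) hσ
  have hσh : 0 < σh0 + σh1 := hθσ.trans_le htotal
  have he0_nonneg : 0 ≤ e0 := (abs_nonneg _).trans he0
  have he1_nonneg : 0 ≤ e1 := (abs_nonneg _).trans he1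
  calc |σh1 / (σh0 + σh1) - σ1 / (σ0 + σ1)|
      ≤ (|σ1| * e0 + |σ0| * e1) / (|σh0 + σh1| * |σ0 + σ1|) :=
        abs_div_add_sub_div_add_le hσh.ne' hσ.ne' he0 he1
    _ = (|σ1| * e0 + |σ0| * e1) / ((σh0 + σh1) * (σ0 + σ1)) := by
        rw [abs_of_pos hσh, abs_of_pos hσ]
    _ ≤ (|σ1| * e0 + |σ0| * e1) / ((1 - θ) * (σ0 + σ1) * (σ0 + σ1)) := by gcongr
    _ = (|σ1| * e0 + |σ0| * e1) / ((1 - θ) * (σ0 + σ1) ^ 2) := by rw [mul_assoc, ← sq]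

end LinearOrderedField

/-- Deterministic rate bound for the plug-in Neyman allocation: if σ₀, σ₁ > 0 and
|σ̂_z − σ_z| ≤ e_z with 0 ≤ e_z ≤ σ_z/2 for z ∈ {0,1}, then
|σ̂₁/(σ̂₀+σ̂₁) − σ₁/(σ₀+σ₁)| ≤ 2(σ₁e₀ + σ₀e₁)/(σ₀+σ₁)². -/
theorem stmt11 (σ0 σ1 σh0 σh1 e0 e1 : ℝ) (h0 : 0 < σ0) (h1 : 0 < σ1)
    (he0 : |σh0 - σ0| ≤ e0) (he1 : |σh1 - σ1| ≤ e1)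
    (he0' : 0 ≤ e0) (he0'' : e0 ≤ σ0 / 2)
    (he1' : 0 ≤ e1) (he1'' : e1 ≤ σ1 / 2) :
    |σh1 / (σh0 + σh1) - σ1 / (σ0 + σ1)|
      ≤ 2 * (σ1 * e0 + σ0 * e1) / (σ0 + σ1)^2 := by
  have h := stmt11_general (θ := 1 / 2) (add_pos h0 h1) he0 he1 (by linarith) (by norm_num)
  exact h.trans_eq (by rw [abs_of_pos h0, abs_of_pos h1]; field_simp; ring)
end

section
/- Let X be a real random variable and let A, B > 0 be constants such that P(|X| ≥ ε) ≤ 2·exp(−A(ε−B)²) for every ε > B. Then E[X²] ≤ 2B² + (π+2)/A, where π denotes the circle constant. -/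
open MeasureTheory

open Set
open scoped ENNReal

/-!
By the layer-cake formula, `E[X²] = 2 ∫₀^∞ t P(|X| ≥ t) dt`. Below `B` the probability is bounded by
`1`, which contributes `B²`; above `B` the tail bound and the substitution `t = s + B` leave
`4 ∫₀^∞ (s + B) exp(-A s²) ds = 2 / A + 2 B √(π / A)`, and AM-GM bounds the last term by
`B² + π / A`.
-/

section LayerCake

variable {α : Type*} [MeasurableSpace α] (μ : Measure α) {f : α → ℝ} {p : ℝ}

theorem exists_measurable_le_lintegral_rpow_eq (hf : 0 ≤ f) (hp : 0 < p) :
    ∃ g : α → ℝ, Measurable g ∧ 0 ≤ g ∧ g ≤ f ∧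
      ∫⁻ a, ENNReal.ofReal (f a ^ p) ∂μ = ∫⁻ a, ENNReal.ofReal (g a ^ p) ∂μ := by
  obtain ⟨h, hmeas, hle, hint⟩ :=
    exists_measurable_le_lintegral_eq μ fun a ↦ ENNReal.ofReal (f a ^ p)
  refine ⟨fun a ↦ (h a).toReal ^ p⁻¹, hmeas.ennreal_toReal.pow_const _,
    fun a ↦ Real.rpow_nonneg ENNReal.toReal_nonneg _, fun a ↦ ?_, ?_⟩
  · rw [Real.rpow_inv_le_iff_of_pos ENNReal.toReal_nonneg (hf a) hp]
    exact ENNReal.toReal_le_of_le_ofReal (Real.rpow_nonneg (hf a) p) (hle a)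
  · refine hint.trans (lintegral_congr fun a ↦ ?_)
    rw [Real.rpow_inv_rpow ENNReal.toReal_nonneg hp.ne',
      ENNReal.ofReal_toReal ((hle a).trans_lt ENNReal.ofReal_lt_top).ne]

theorem lintegral_rpow_le_lintegral_meas_le_mul (hf : 0 ≤ f) (hp : 0 < p) :
    ∫⁻ a, ENNReal.ofReal (f a ^ p) ∂μ ≤
      ENNReal.ofReal p * ∫⁻ t in Ioi 0, μ {a | t ≤ f a} * ENNReal.ofReal (t ^ (p - 1)) := by
  obtain ⟨g, hmeas, hg, hgf, hint⟩ := exists_measurable_le_lintegral_rpow_eq μ hf hp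
  rw [hint, lintegral_rpow_eq_lintegral_meas_le_mul μ (ae_of_all μ hg) hmeas.aemeasurable hp]
  gcongr with t a
  exact hgf a

theorem lintegral_Ioc_zero_rpow_sub_one (hp : 0 < p) {b : ℝ} (hb : 0 ≤ b) :
    ∫⁻ t in Ioc 0 b, ENNReal.ofReal (t ^ (p - 1)) = ENNReal.ofReal (b ^ p / p) := by
  have hp' : -1 < p - 1 := by linarith
  rw [← ofReal_integral_eq_lintegral_ofReal, ← intervalIntegral.integral_of_le hb,
    integral_rpow (.inl hp'), sub_add_cancel, Real.zero_rpow hp.ne', sub_zero]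
  · exact (intervalIntegral.intervalIntegrable_rpow' hp').1
  · filter_upwards [self_mem_ae_restrict measurableSet_Ioc] with t ht
      using Real.rpow_nonneg ht.1.le _

theorem lintegral_rpow_le_of_meas_le (hf : 0 ≤ f) (hp : 0 < p) (b : ℝ) {φ : ℝ → ℝ≥0∞}
    (htail : ∀ t, b < t → μ {a | t ≤ f a} ≤ φ t) :
    ∫⁻ a, ENNReal.ofReal (f a ^ p) ∂μ ≤ μ univ * ENNReal.ofReal (|b| ^ p) +
      ENNReal.ofReal p * ∫⁻ t in Ioi b, φ t * ENNReal.ofReal (t ^ (p - 1)) := by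
  have hcover : Ioi 0 ⊆ Ioc 0 |b| ∪ Ioi b := fun t ht ↦
    (le_or_gt t |b|).imp (⟨ht, ·⟩) (le_abs_self b).trans_lt
  calc ∫⁻ a, ENNReal.ofReal (f a ^ p) ∂μ
    _ ≤ ENNReal.ofReal p * ∫⁻ t in Ioi 0, μ {a | t ≤ f a} * ENNReal.ofReal (t ^ (p - 1)) :=
      lintegral_rpow_le_lintegral_meas_le_mul μ hf hp
    _ ≤ ENNReal.ofReal p * ((∫⁻ t in Ioc 0 |b|, μ {a | t ≤ f a} * ENNReal.ofReal (t ^ (p - 1))) +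
          ∫⁻ t in Ioi b, μ {a | t ≤ f a} * ENNReal.ofReal (t ^ (p - 1))) := by
      gcongr
      exact (lintegral_mono_set hcover).trans (lintegral_union_le _ _ _)
    _ ≤ ENNReal.ofReal p * ((∫⁻ t in Ioc 0 |b|, μ univ * ENNReal.ofReal (t ^ (p - 1))) +
          ∫⁻ t in Ioi b, φ t * ENNReal.ofReal (t ^ (p - 1))) := by
      gcongr ENNReal.ofReal p * (?_ + ?_)
      · gcongr
        exact subset_univ _
      · exact setLIntegral_mono' measurableSet_Ioi fun t ht ↦ by gcongr; exact htail t ht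
    _ = μ univ * ENNReal.ofReal (|b| ^ p) +
          ENNReal.ofReal p * ∫⁻ t in Ioi b, φ t * ENNReal.ofReal (t ^ (p - 1)) := by
      rw [lintegral_const_mul _ (by fun_prop), lintegral_Ioc_zero_rpow_sub_one hp (abs_nonneg b),
        mul_add, mul_left_comm, ← ENNReal.ofReal_mul hp.le, mul_div_cancel₀ _ hp.ne']

end LayerCake

section ShiftedGaussian

variable {A : ℝ}

theorem integral_Ioi_mul_exp_neg_mul_sq (hA : 0 < A) :
    ∫ s in Ioi (0 : ℝ), s * Real.exp (-A * s ^ 2) = (2 * A)⁻¹ := by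
  have hcomplex := integral_mul_cexp_neg_mul_sq (b := A) (by simpa using hA)
  exact_mod_cast hcomplex

theorem integrable_add_mul_exp_neg_mul_sq (hA : 0 < A) (b : ℝ) :
    Integrable fun s : ℝ ↦ (s + b) * Real.exp (-A * s ^ 2) := by
  simpa only [add_mul] using
    (integrable_mul_exp_neg_mul_sq hA).fun_add ((integrable_exp_neg_mul_sq hA).const_mul b)

theorem integral_Ioi_add_mul_exp_neg_mul_sq (hA : 0 < A) (b : ℝ) :
    ∫ s in Ioi (0 : ℝ), (s + b) * Real.exp (-A * s ^ 2) = (2 * A)⁻¹ + b * (√(Real.pi / A) / 2) := by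
  simp only [add_mul]
  rw [integral_add (integrable_mul_exp_neg_mul_sq hA).integrableOn
      ((integrable_exp_neg_mul_sq hA).const_mul b).integrableOn, integral_const_mul,
    integral_Ioi_mul_exp_neg_mul_sq hA, integral_gaussian_Ioi]

theorem lintegral_Ioi_eq_lintegral_Ioi_zero_comp_add (F : ℝ → ℝ≥0∞) (b : ℝ) :
    ∫⁻ t in Ioi b, F t = ∫⁻ s in Ioi 0, F (s + b) := by
  have hshift := (measurePreserving_add_right volume b).setLIntegral_comp_preimage_emb
    (measurableEmbedding_addRight b) F (Ioi b)
  rw [← hshift, preimage_add_const_Ioi, sub_self]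

theorem lintegral_Ioi_exp_neg_mul_sub_sq_mul_le (hA : 0 < A) (b : ℝ) :
    ∫⁻ t in Ioi b, ENNReal.ofReal (Real.exp (-A * (t - b) ^ 2)) * ENNReal.ofReal t ≤
      ENNReal.ofReal ((2 * A)⁻¹ + |b| * (√(Real.pi / A) / 2)) := by
  rw [lintegral_Ioi_eq_lintegral_Ioi_zero_comp_add, ← integral_Ioi_add_mul_exp_neg_mul_sq hA,
    ofReal_integral_eq_lintegral_ofReal]
  · refine lintegral_mono fun s ↦ ?_
    rw [add_sub_cancel_right, ENNReal.ofReal_mul' (Real.exp_nonneg _), mul_comm]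
    gcongr
    exact le_abs_self b
  · exact (integrable_add_mul_exp_neg_mul_sq hA |b|).integrableOn
  · filter_upwards [self_mem_ae_restrict measurableSet_Ioi] with s hs
    exact mul_nonneg (add_nonneg (mem_Ioi.mp hs).le (abs_nonneg b)) (Real.exp_nonneg _)

theorem inv_two_mul_add_abs_mul_sqrt_le (hA : 0 < A) (b : ℝ) :
    (2 * A)⁻¹ + |b| * (√(Real.pi / A) / 2) ≤ (b ^ 2 + (Real.pi + 2) / A) / 4 := by
  have amgm := two_mul_le_add_sq |b| √(Real.pi / A)
  rw [sq_abs, Real.sq_sqrt (by positivity)] at amgm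
  calc (2 * A)⁻¹ + |b| * (√(Real.pi / A) / 2)
    _ = (2 * A)⁻¹ + 2 * |b| * √(Real.pi / A) / 4 := by ring
    _ ≤ (2 * A)⁻¹ + (b ^ 2 + Real.pi / A) / 4 := by gcongr
    _ = (b ^ 2 + (Real.pi + 2) / A) / 4 := by ring

end ShiftedGaussian

theorem stmt12_general {Ω E : Type*} [MeasurableSpace Ω] [SeminormedAddCommGroup E]
    (μ : Measure Ω) (X : Ω → E) {A : ℝ} (hA : 0 < A) (B : ℝ) (C : ℝ≥0∞)
    (htail : ∀ ε : ℝ, B < ε →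
      μ {ω | ε ≤ ‖X ω‖} ≤ C * ENNReal.ofReal (Real.exp (-A * (ε - B) ^ 2))) :
    ∫⁻ ω, ENNReal.ofReal (‖X ω‖ ^ 2) ∂μ ≤
      μ univ * ENNReal.ofReal (B ^ 2) +
        C * ENNReal.ofReal ((B ^ 2 + (Real.pi + 2) / A) / 2) := by
  have hmoment := lintegral_rpow_le_of_meas_le μ (fun ω ↦ norm_nonneg (X ω)) two_pos B htail
  have hone : (2 : ℝ) - 1 = 1 := by norm_num
  simp only [Real.rpow_two, sq_abs, hone, Real.rpow_one, mul_assoc C] at hmoment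
  rw [lintegral_const_mul C (by fun_prop), mul_left_comm] at hmoment
  refine hmoment.trans ?_
  gcongr
  calc ENNReal.ofReal 2 *
        ∫⁻ t in Ioi B, ENNReal.ofReal (Real.exp (-A * (t - B) ^ 2)) * ENNReal.ofReal t
    _ ≤ ENNReal.ofReal 2 * ENNReal.ofReal ((B ^ 2 + (Real.pi + 2) / A) / 4) := by
      gcongr
      exact (lintegral_Ioi_exp_neg_mul_sub_sq_mul_le hA B).trans
        (ENNReal.ofReal_le_ofReal (inv_two_mul_add_abs_mul_sqrt_le hA B))
    _ = ENNReal.ofReal ((B ^ 2 + (Real.pi + 2) / A) / 2) := by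
      rw [← ENNReal.ofReal_mul zero_le_two]
      ring_nf

/-- Exponential tail bound to mean-squared-error bound: if
P(|X| ≥ ε) ≤ 2 exp(−A(ε−B)²) for every ε > B, then E[X²] ≤ 2B² + (π+2)/A. -/
theorem stmt12 {Ω : Type*} [m0 : MeasurableSpace Ω]
    (P : Measure Ω) [IsProbabilityMeasure P]
    (X : Ω → ℝ) (A B : ℝ) (hA : 0 < A) (hB : 0 < B)
    (htail : ∀ ε : ℝ, B < ε →
      P {ω | ε ≤ |X ω|} ≤ ENNReal.ofReal (2 * Real.exp (-A * (ε - B)^2))) :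
    ∫⁻ ω, ENNReal.ofReal ((X ω)^2) ∂P ≤ ENNReal.ofReal (2 * B^2 + (Real.pi + 2) / A) := by
  rw [show 2 * B ^ 2 + (Real.pi + 2) / A = B ^ 2 + 2 * ((B ^ 2 + (Real.pi + 2) / A) / 2) by ring,
    ENNReal.ofReal_add (by positivity) (by positivity), ENNReal.ofReal_mul zero_le_two]
  simpa using stmt12_general P X hA B 2 (by simpa [ENNReal.ofReal_mul] using htail)
end
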